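/- For all 1 ≤ j ≤ k and every nondecreasing surjection f : {0,1,…,k} → {0,1,…,j}, the generalized tetris operation b ↦ f∘b from FIN_k to FIN_j is equal to a composition of multiple tetris operations; that is, there exist i_{j+1},…,i_k with 1 ≤ i_ℓ ≤ ℓ such that f∘b = (T_{i_{j+1}} ∘ T_{i_{j+2}} ∘ ⋯ ∘ T_{i_k})(b) for every b ∈ FIN_k, where each T_{i_ℓ} is taken as a map FIN_ℓ → FIN_{ℓ−1}. -/

import Mathlib

/-!
A nondecreasing surjection `f : {0,…,k} → {0,…,j}` starts at `0`, ends at `j` and moves by steps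
of size at most one. If `k = j`, this forces `f` to be the identity
(`IsTetrisFn.eq_self`) and the empty composition works. If `k > j`, some step is constant, say
`f p = f (p + 1)` with `p < k` (`IsTetrisFn.exists_eq_succ`). Then `f` factors as `g ∘ σ`, where
`σ` is the map collapsing `p` and `p + 1`, so that `b ↦ σ ∘ b` is `T_{p+1}`, and `g` is a
nondecreasing surjection `{0,…,k-1} → {0,…,j}` (`IsTetrisFn.collapse`). Induction on `k - j`
concludes; only the bound `b n ≤ k` on elements of `FIN k` is needed.
-/

/-- `FIN k`: finitely supported functions `ℕ → {0,…,k}` attaining the maximum value `k`. -/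
def FIN (k : ℕ) : Set (ℕ → ℕ) :=
  {b | (∀ n, b n ≤ k) ∧ {n | b n ≠ 0}.Finite ∧ ∃ n, b n = k}

/-- `f` is (the extension to `ℕ` of) a nondecreasing surjection `{0,…,k} → {0,…,j}`. -/
def IsTetrisFn (k j : ℕ) (f : ℕ → ℕ) : Prop :=
  (∀ i i', i' ≤ i → i ≤ k → f i' ≤ f i) ∧ (∀ i, i ≤ k → f i ≤ j) ∧
    ∀ m, m ≤ j → ∃ i, i ≤ k ∧ f i = m

/-- The multiple tetris operation `T_i`: decrease by one every value that is `≥ i`. -/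
def Tmul (i : ℕ) (b : ℕ → ℕ) : ℕ → ℕ := fun n => if i ≤ b n then b n - 1 else b n

theorem IsTetrisFn.map_zero {k j : ℕ} {f : ℕ → ℕ} (hf : IsTetrisFn k j f) : f 0 = 0 := by
  obtain ⟨h1, -, h3⟩ := hf
  obtain ⟨i, hi, e⟩ := h3 0 (Nat.zero_le _)
  have := h1 i 0 (Nat.zero_le _) hi
  omega

theorem IsTetrisFn.map_top {k j : ℕ} {f : ℕ → ℕ} (hf : IsTetrisFn k j f) : f k = j := by
  obtain ⟨h1, h2, h3⟩ := hf
  obtain ⟨i, hi, e⟩ := h3 j le_rfl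
  have := h1 k i hi le_rfl
  have := h2 k le_rfl
  omega

/-- A larger jump would skip the value `f i + 1`. -/
theorem IsTetrisFn.map_succ_le {k j : ℕ} {f : ℕ → ℕ} (hf : IsTetrisFn k j f) {i : ℕ}
    (hi : i < k) : f (i + 1) ≤ f i + 1 := by
  obtain ⟨h1, h2, h3⟩ := hf
  by_contra! hlt
  have := h2 (i + 1) hi
  obtain ⟨m, hm, e⟩ := h3 (f i + 1) (by omega)
  rcases Nat.lt_or_ge i m with h | h
  · have := h1 m (i + 1) h hm
    omega
  · have := h1 i m h hi.le
    omega

theorem IsTetrisFn.map_add_le {k j : ℕ} {f : ℕ → ℕ} (hf : IsTetrisFn k j f) (i d : ℕ)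
    (h : i + d ≤ k) : f (i + d) ≤ f i + d := by
  induction d with
  | zero => simp
  | succ d ih =>
    have := ih (by omega)
    have := hf.map_succ_le (i := i + d) (by omega)
    rw [← add_assoc]
    omega

theorem IsTetrisFn.eq_self {k : ℕ} {f : ℕ → ℕ} (hf : IsTetrisFn k k f) {i : ℕ}
    (hi : i ≤ k) : f i = i := by
  have h1 := hf.map_add_le 0 i (by omega)
  have h2 := hf.map_add_le i (k - i) (by omega)
  rw [Nat.add_sub_cancel' hi, hf.map_top] at h2
  rw [zero_add, hf.map_zero] at h1
  omega

theorem IsTetrisFn.exists_eq_succ {k j : ℕ} {f : ℕ → ℕ} (hf : IsTetrisFn k j f)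
    (hjk : j < k) : ∃ p < k, f p = f (p + 1) := by
  by_contra! hne
  have key : ∀ i ≤ k, i ≤ f i := by
    intro i
    induction i with
    | zero => simp
    | succ i ih =>
      intro hi
      have := ih (by omega)
      have := hne i (by omega)
      have := hf.1 (i + 1) i (by omega) hi
      omega
  have := key k le_rfl
  have := hf.map_top
  omega

/-- Skipping the argument `p + 1`, where `f` repeats the value `f p`, keeps `f` a nondecreasing
surjection. -/
theorem IsTetrisFn.collapse {k j p : ℕ} {f : ℕ → ℕ} (hf : IsTetrisFn (k + 1) j f)
    (hp : p < k + 1) (he : f p = f (p + 1)) :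
    IsTetrisFn k j (fun m => if m ≤ p then f m else f (m + 1)) := by
  obtain ⟨h1, h2, h3⟩ := hf
  refine ⟨fun i i' hii hi => ?_, fun i hi => ?_, fun m hm => ?_⟩
  · dsimp only
    split_ifs
    · exact h1 _ _ hii (by omega)
    · exact h1 _ _ (by omega) (by omega)
    · omega
    · exact h1 _ _ (by omega) (by omega)
  · dsimp only
    split_ifs
    · exact h2 _ (by omega)
    · exact h2 _ (by omega)
  · obtain ⟨i, hi, e⟩ := h3 m hm
    rcases Nat.lt_trichotomy i (p + 1) with h | h | h
    · exact ⟨i, by omega, by simp [Nat.lt_succ_iff.mp h, e]⟩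
    · exact ⟨p, by omega, by simp [he, ← h, e]⟩
    · refine ⟨i - 1, by omega, ?_⟩
      dsimp only
      rw [if_neg (by omega), Nat.sub_add_cancel (by omega), e]

/-- The theorem with `k = j + d`, for all `b` bounded by `k`, in the form suited to induction
on `d`. -/
theorem IsTetrisFn.exists_foldl (j d : ℕ) : ∀ f : ℕ → ℕ, IsTetrisFn (j + d) j f →
    ∃ i : ℕ → ℕ, (∀ l, j < l → l ≤ j + d → 1 ≤ i l ∧ i l ≤ l) ∧
      ∀ b : ℕ → ℕ, (∀ n, b n ≤ j + d) →
        f ∘ b = (List.range d).foldl (fun c s => Tmul (i (j + d - s)) c) b := by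
  induction d with
  | zero =>
    intro f hf
    refine ⟨id, fun l h1 h2 => by omega, fun b hb => ?_⟩
    funext n
    exact hf.eq_self (hb n)
  | succ d ih =>
    intro f hf
    obtain ⟨p, hp, he⟩ := hf.exists_eq_succ (by omega)
    obtain ⟨i, hi, hfold⟩ := ih _ (IsTetrisFn.collapse (k := j + d) hf hp he)
    refine ⟨Function.update i (j + (d + 1)) (p + 1), fun l h1 h2 => ?_, fun b hb => ?_⟩
    · by_cases hl : l = j + (d + 1)
      · subst hl
        simp only [Function.update_self]
        omega
      · rw [Function.update_of_ne hl]
        exact hi l h1 (by omega)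
    · have hT : ∀ n, Tmul (p + 1) b n ≤ j + d := by
        intro n
        have := hb n
        unfold Tmul
        split_ifs <;> omega
      have hupd : ∀ s, Function.update i (j + (d + 1)) (p + 1) (j + (d + 1) - (s + 1))
          = i (j + d - s) := by
        intro s
        rw [Function.update_of_ne (by omega)]
        congr 1
        omega
      rw [List.range_succ_eq_map, List.foldl_cons, List.foldl_map]
      simp only [Nat.succ_eq_add_one, hupd, Nat.sub_zero, Function.update_self]
      rw [← hfold _ hT]
      funext n
      simp only [Function.comp_apply]
      by_cases h : p + 1 ≤ b n
      · have hv : Tmul (p + 1) b n = b n - 1 := if_pos h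
        rw [hv]
        by_cases h' : b n - 1 ≤ p
        · have hbn : b n = p + 1 := by omega
          simp [hbn, he]
        · rw [if_neg h', Nat.sub_add_cancel (by omega)]
      · have hv : Tmul (p + 1) b n = b n := if_neg h
        rw [hv, if_pos (by omega)]

/-- Every generalized tetris operation `FIN_k → FIN_j` (`1 ≤ j ≤ k`) is a composition
`T_{i_{j+1}} ∘ T_{i_{j+2}} ∘ ⋯ ∘ T_{i_k}` of multiple tetris operations, where
`1 ≤ i_ℓ ≤ ℓ` and `T_{i_ℓ}` is applied as a map `FIN_ℓ → FIN_{ℓ-1}`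
(so `T_{i_k}` is applied first). -/
theorem tetris_is_composition_of_multiple_tetris (k j : ℕ) (hj : 1 ≤ j) (hjk : j ≤ k)
    (f : ℕ → ℕ) (hf : IsTetrisFn k j f) :
    ∃ i : ℕ → ℕ, (∀ l, j < l → l ≤ k → 1 ≤ i l ∧ i l ≤ l) ∧
      ∀ b ∈ FIN k, f ∘ b = (List.range (k - j)).foldl (fun c s => Tmul (i (k - s)) c) b := by
  obtain ⟨d, rfl⟩ := Nat.exists_eq_add_of_le hjk
  obtain ⟨i, hi, h⟩ := IsTetrisFn.exists_foldl j d f hf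
  refine ⟨i, hi, fun b hb => ?_⟩
  rw [Nat.add_sub_cancel_left]
  exact h b hb.1
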